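/- Let (A,B) be a symmetric pair of subsets of V' and r > 0. For X ⊆ V' define the cut value c(X) := b(A∖X) + b(B∩X) + r⁻¹·w(E'(X, V'∖X)) (this is the capacity of the s⁺–s⁻ cut X ∪ {s⁺} in the auxiliary network N_{A,B,r}). Call a vertex i ∈ V inconsistent in X if both i⁺ ∈ X and i⁻ ∈ X, and let X' be obtained from X by removing both copies of every inconsistent vertex. Then c(X') ≤ c(X); in particular, if X ∪ {s⁺} is a minimum s⁺–s⁻ cut of N_{A,B,r}, then so is X' ∪ {s⁺}. -/

import Mathlib

/-!
Both parts of the cut value are sums of local terms that depend on `X` only through its indicator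
function. The vertex part splits over `i : V` (`bSum_eq_sum`); an inconsistent `i` in `L` or `R`
pays `b i` exactly once both before and after its two copies are removed, so the vertex part is
unchanged. The edge part splits over pairs `(i, j)`, and by the symmetry of `w` the two crossings
`{i⁺, j⁻}` and `{i⁻, j⁺}` may be grouped together (`two_mul_cutW_eq_sum`). If exactly
one of `i`, `j` is inconsistent and `k ≤ 1` copies of the other lie in `X`, the pair is crossed
`2 - k` times before the removal and `k ≤ 2 - k` times after it; otherwise nothing changes.
-/

open Finset

/-- Edge weights of the auxiliary bipartite graph `G'` on `V⁺ ⊕ V⁻`. -/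
noncomputable def auxW {V : Type*} (w : V → V → ℝ) : V ⊕ V → V ⊕ V → ℝ
  | Sum.inl i, Sum.inr j => w i j
  | Sum.inr i, Sum.inl j => w i j
  | _, _ => 0

/-- Vertex weights on `V' = V⁺ ⊕ V⁻` induced by `b`. -/
noncomputable def auxB {V : Type*} (b : V → ℝ) : V ⊕ V → ℝ := Sum.elim b b

/-- `w(E'(X, V'∖X))`: total weight of the edges of the auxiliary graph crossing `X`. -/
noncomputable def cutW {V : Type*} [Fintype V] [DecidableEq V] (w : V → V → ℝ)
    (X : Finset (V ⊕ V)) : ℝ :=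
  ∑ u ∈ X, ∑ v ∈ Xᶜ, auxW w u v

/-- `b(S)` for `S ⊆ V'`. -/
noncomputable def bSum {V : Type*} (b : V → ℝ) (S : Finset (V ⊕ V)) : ℝ :=
  ∑ u ∈ S, auxB b u

/-- The capacity `c(X) = b(A∖X) + b(B∩X) + r⁻¹·w(E'(X, V'∖X))` of the `s⁺–s⁻` cut
`X ∪ {s⁺}` of the auxiliary network `N_{A,B,r}`. -/
noncomputable def cutVal {V : Type*} [Fintype V] [DecidableEq V] (w : V → V → ℝ) (b : V → ℝ)
    (r : ℝ) (A B X : Finset (V ⊕ V)) : ℝ :=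
  bSum b (A \ X) + bSum b (B ∩ X) + r⁻¹ * cutW w X

/-- The vertex part of the cut value as a sum of local contributions over `V`. -/
lemma bSum_eq_sum {V : Type*} [Fintype V] [DecidableEq V] (b : V → ℝ) (L R : Finset V)
    (A B X : Finset (V ⊕ V))
    (hA : A = (L.image Sum.inl) ∪ (R.image Sum.inr))
    (hB : B = (L.image Sum.inr) ∪ (R.image Sum.inl)) :
    bSum b (A \ X) + bSum b (B ∩ X) =
      ∑ i, ((if i ∈ L ∧ Sum.inl i ∉ X then b i else 0) +
            (if i ∈ R ∧ Sum.inr i ∉ X then b i else 0) +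
            ((if i ∈ R ∧ Sum.inl i ∈ X then b i else 0) +
            (if i ∈ L ∧ Sum.inr i ∈ X then b i else 0))) := by
  have key : ∀ S : Finset (V ⊕ V), bSum b S =
      ∑ i, ((if Sum.inl i ∈ S then b i else 0) + (if Sum.inr i ∈ S then b i else 0)) := by
    intro S
    rw [bSum, sum_add_distrib, ← Fintype.sum_ite_mem, Fintype.sum_sum_type]
    simp [auxB]
  rw [key, key, ← sum_add_distrib]
  subst hA hB
  simp

/-- Twice the cut weight as a sum over ordered pairs `(i, j)`, in which the crossings of
`{i⁺, j⁻}` and `{i⁻, j⁺}` are grouped together. -/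
lemma two_mul_cutW_eq_sum {V : Type*} [Fintype V] [DecidableEq V] (w : V → V → ℝ)
    (hw_symm : ∀ i j, w i j = w j i) (X : Finset (V ⊕ V)) :
    2 * cutW w X =
      ∑ i, ∑ j, w i j *
        (((if Sum.inl i ∈ X ∧ Sum.inr j ∉ X then 1 else 0) +
          (if Sum.inr i ∈ X ∧ Sum.inl j ∉ X then 1 else 0)) +
         ((if Sum.inl j ∈ X ∧ Sum.inr i ∉ X then 1 else 0) +
          (if Sum.inr j ∈ X ∧ Sum.inl i ∉ X then 1 else 0))) := by
  have key : cutW w X = ∑ i, ∑ j, w i j *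
        ((if Sum.inl i ∈ X ∧ Sum.inr j ∉ X then 1 else 0) +
          (if Sum.inr i ∈ X ∧ Sum.inl j ∉ X then 1 else 0)) := by
    have h1 : cutW w X =
        ∑ u, ∑ v, if u ∈ X ∧ v ∉ X then auxW w u v else 0 := by
      rw [cutW, ← Fintype.sum_ite_mem]
      refine sum_congr rfl fun u _ => ?_
      by_cases hu : u ∈ X
      · simp only [hu, if_true, true_and]
        rw [← Fintype.sum_ite_mem]
        simp
      · simp [hu]
    rw [h1, Fintype.sum_sum_type]
    simp only [Fintype.sum_sum_type, auxW, ite_self, sum_const_zero, zero_add, add_zero,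
      mul_add, sum_add_distrib, mul_ite, mul_one, mul_zero]
  have key' := key
  rw [sum_comm] at key'
  rw [two_mul]
  nth_rewrite 1 [key]
  rw [key', ← sum_add_distrib]
  refine sum_congr rfl fun i _ => ?_
  rw [← sum_add_distrib]
  refine sum_congr rfl fun j _ => ?_
  rw [hw_symm j i]
  ring

/-- For a symmetric pair `(A,B)` with `A = L⁺ ∪ R⁻`, `B = L⁻ ∪ R⁺`, and any
`X ⊆ V'`, removing both copies of every inconsistent vertex (one with both `i⁺ ∈ X` and
`i⁻ ∈ X`) from `X` does not increase the cut value `c(X)`; in particular if `X ∪ {s⁺}` is a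
minimum `s⁺–s⁻` cut of `N_{A,B,r}`, so is `X' ∪ {s⁺}`. -/
theorem stmt_1 {V : Type*} [Fintype V] [DecidableEq V]
    (w : V → V → ℝ) (hw_symm : ∀ i j, w i j = w j i) (hw_nonneg : ∀ i j, 0 ≤ w i j)
    (hw_loop : ∀ i, w i i = 0)
    (b : V → ℝ) (hb : ∀ i, 0 < b i)
    (r : ℝ) (hr : 0 < r)
    (L R : Finset V) (hLR : Disjoint L R)
    (A B : Finset (V ⊕ V))
    (hA : A = (L.image Sum.inl) ∪ (R.image Sum.inr))
    (hB : B = (L.image Sum.inr) ∪ (R.image Sum.inl))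
    (X X' : Finset (V ⊕ V))
    (hX' : X' = X \ (((univ.filter fun i : V => Sum.inl i ∈ X ∧ Sum.inr i ∈ X).image Sum.inl) ∪
                     ((univ.filter fun i : V => Sum.inl i ∈ X ∧ Sum.inr i ∈ X).image Sum.inr))) :
    cutVal w b r A B X' ≤ cutVal w b r A B X := by
  have hl : ∀ i, Sum.inl i ∈ X' ↔ Sum.inl i ∈ X ∧ Sum.inr i ∉ X := by
    intro i
    subst hX'
    simp
    tauto
  have hr' : ∀ i, Sum.inr i ∈ X' ↔ Sum.inr i ∈ X ∧ Sum.inl i ∉ X := by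
    intro i
    subst hX'
    simp
    tauto
  have hvert : bSum b (A \ X') + bSum b (B ∩ X') = bSum b (A \ X) + bSum b (B ∩ X) := by
    rw [bSum_eq_sum b L R A B X' hA hB, bSum_eq_sum b L R A B X hA hB]
    refine sum_congr rfl fun i _ => ?_
    simp only [hl, hr']
    by_cases h1 : Sum.inl i ∈ X <;> by_cases h2 : Sum.inr i ∈ X <;>
      simp [h1, h2, add_comm]
  have hedge : 2 * cutW w X' ≤ 2 * cutW w X := by
    rw [two_mul_cutW_eq_sum w hw_symm, two_mul_cutW_eq_sum w hw_symm]
    refine sum_le_sum fun i _ => sum_le_sum fun j _ =>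
      mul_le_mul_of_nonneg_left ?_ (hw_nonneg i j)
    simp only [hl, hr']
    by_cases h1 : Sum.inl i ∈ X <;> by_cases h2 : Sum.inr i ∈ X <;>
      by_cases h3 : Sum.inl j ∈ X <;> by_cases h4 : Sum.inr j ∈ X <;>
      simp [h1, h2, h3, h4]
  have hmul : r⁻¹ * cutW w X' ≤ r⁻¹ * cutW w X :=
    mul_le_mul_of_nonneg_left (by linarith) (inv_pos.mpr hr).le
  unfold cutVal
  linarith
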